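/- arXiv:1801.06398 — 2 statements merged into one kernel-verified Lean document; each statement's English description precedes it below -/
import Mathlib

section
/- Estimate on the trace of a sum of products (finite-dimensional form): let T be an n×n Hermitian complex matrix and let S₁, …, S_k be positive semidefinite n×n Hermitian matrices with S₁² + ⋯ + S_k² ⪯ I. Then Tr((Σ_{j=1}^{k} S_j T S_j)₋) ≤ Σ_{j=1}^{k} Tr((S_j T S_j)₋) ≤ Tr(T₋). -/
noncomputable section

open Matrix Finset
open scoped ComplexOrder

/-- Trace of the negative part of a matrix: Σᵢ max(0, −λᵢ) over the eigenvalues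
of a Hermitian matrix (junk value 0 for non-Hermitian matrices). -/
def trNeg {n : ℕ} (X : Matrix (Fin n) (Fin n) ℂ) : ℝ :=
  if h : X.IsHermitian then ∑ i, max 0 (-(h.eigenvalues i)) else 0

/-- Loewner order: X ⪯ Y iff Y − X is positive semidefinite. -/
def loewnerLE {n : ℕ} (X Y : Matrix (Fin n) (Fin n) ℂ) : Prop :=
  (Y - X).PosSemidef

/-!
For a Hermitian matrix `X`, the trace of `X⁻` is the least trace of a matrix `P ≥ 0` with `-X ≤ P`:
if `E` is the spectral projection of `X` onto `(-∞, 0)`, then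
`tr X⁻ = tr (E (-X)) ≤ tr (E P) ≤ tr P`. The matrices `∑ⱼ Xⱼ⁻` and `Sⱼᴴ T⁻ Sⱼ` are admissible
competitors for `∑ⱼ Xⱼ` and `Sⱼᴴ T Sⱼ`, which yields the first inequality and
`∑ⱼ tr (Sⱼᴴ T Sⱼ)⁻ ≤ tr (T⁻ ∑ⱼ Sⱼ Sⱼᴴ) ≤ tr T⁻`.
-/

theorem negPart_eq_cfc {A : Type*} [Ring A] [Algebra ℝ A] [StarRing A] [TopologicalSpace A]
    [ContinuousFunctionalCalculus ℝ A IsSelfAdjoint] [T2Space A] (a : A) :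
    a⁻ = cfc (·⁻ : ℝ → ℝ) a := by
  rw [CFC.negPart_def, cfcₙ_eq_cfc]

section TraceNegPart

open scoped MatrixOrder

variable {𝕜 m n ι : Type*} [RCLike 𝕜] [Fintype n]

theorem trace_mul_nonneg {P Q : Matrix n n 𝕜} (hP : 0 ≤ P) (hQ : 0 ≤ Q) :
    0 ≤ (P * Q).trace := by
  classical
  obtain ⟨B, rfl⟩ := CStarAlgebra.nonneg_iff_eq_star_mul_self.mp hP
  rw [mul_assoc, trace_mul_comm]
  exact (hQ.posSemidef.mul_mul_conjTranspose_same B).trace_nonneg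

theorem trace_mul_le_trace_mul_left {P Q R : Matrix n n 𝕜} (hP : 0 ≤ P) (hQR : Q ≤ R) :
    (P * Q).trace ≤ (P * R).trace := by
  rw [← sub_nonneg, ← trace_sub, ← mul_sub]
  exact trace_mul_nonneg hP (sub_nonneg.mpr hQR)

theorem conjTranspose_mul_mul_le_conjTranspose_mul_mul [Finite m] {A B : Matrix n n 𝕜}
    (hAB : A ≤ B) (S : Matrix n m 𝕜) : Sᴴ * A * S ≤ Sᴴ * B * S := by
  rw [Matrix.le_iff, ← Matrix.sub_mul, ← Matrix.mul_sub]
  exact (Matrix.le_iff.mp hAB).conjTranspose_mul_mul_same S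

variable [DecidableEq n]

theorem trace_cfc_eq_sum_eigenvalues {X : Matrix n n 𝕜} (hX : X.IsHermitian) (f : ℝ → ℝ) :
    (cfc f X).trace = ∑ i, (f (hX.eigenvalues i) : 𝕜) := by
  rw [hX.cfc_eq, IsHermitian.cfc, Unitary.conjStarAlgAut_apply, trace_mul_comm, ← mul_assoc,
    Unitary.coe_star_mul_self, one_mul, trace_diagonal]
  rfl

theorem exists_mem_Icc_mul_neg_eq_negPart {X : Matrix n n 𝕜} (hX : X.IsHermitian) :
    ∃ E ∈ Set.Icc (0 : Matrix n n 𝕜) 1, E * -X = X⁻ := by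
  set χ : ℝ → ℝ := (Set.Iio 0).indicator 1 with hχ
  have hχ_cont : ContinuousOn χ (spectrum ℝ X) := X.finite_real_spectrum.continuousOn χ
  refine ⟨cfc χ X, ⟨?_, ?_⟩, ?_⟩
  · exact cfc_nonneg fun x _ => Set.indicator_nonneg (fun _ _ => zero_le_one) x
  · exact cfc_le_one χ X fun x _ => Set.indicator_le_self' (fun _ _ => zero_le_one) x
  · calc cfc χ X * -X = cfc χ X * cfc (fun x : ℝ => -x) X := by rw [cfc_neg_id X hX.isSelfAdjoint]
      _ = cfc (fun x => χ x * -x) X := (cfc_mul χ _ X).symm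
      _ = cfc (·⁻ : ℝ → ℝ) X := cfc_congr fun x _ => by
        rcases lt_or_ge x 0 with hx | hx
        · simp [hχ, hx, hx.le]
        · simp [hχ, hx]
      _ = X⁻ := (negPart_eq_cfc X).symm

theorem trace_negPart_le_trace {X P : Matrix n n 𝕜} (hP : 0 ≤ P) (hXP : -X ≤ P) :
    X⁻.trace ≤ P.trace := by
  have hX : X.IsHermitian := by
    simpa using hP.posSemidef.isHermitian.sub (Matrix.le_iff.mp hXP).isHermitian
  obtain ⟨E, ⟨hE_nonneg, hE_le_one⟩, hE⟩ := exists_mem_Icc_mul_neg_eq_negPart hX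
  calc X⁻.trace = (E * -X).trace := by rw [hE]
    _ ≤ (E * P).trace := trace_mul_le_trace_mul_left hE_nonneg hXP
    _ = (P * E).trace := trace_mul_comm E P
    _ ≤ (P * 1).trace := trace_mul_le_trace_mul_left hP hE_le_one
    _ = P.trace := by rw [mul_one]

theorem trace_negPart_sum_le (s : Finset ι) {X : ι → Matrix n n 𝕜}
    (hX : ∀ j ∈ s, (X j).IsHermitian) :
    (∑ j ∈ s, X j)⁻.trace ≤ ∑ j ∈ s, (X j)⁻.trace := by
  rw [← trace_sum]
  refine trace_negPart_le_trace (sum_nonneg fun j _ => CFC.negPart_nonneg (X j)) ?_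
  rw [← sum_neg_distrib]
  exact sum_le_sum fun j hj => neg_le.mp (CFC.neg_negPart_le (hX j hj))

variable [Fintype m] [DecidableEq m]

theorem trace_negPart_conjTranspose_mul_mul_le {T : Matrix n n 𝕜} (hT : T.IsHermitian)
    (S : Matrix n m 𝕜) : (Sᴴ * T * S)⁻.trace ≤ (T⁻ * (S * Sᴴ)).trace := by
  have h_nonneg : 0 ≤ Sᴴ * T⁻ * S := by
    simpa using conjTranspose_mul_mul_le_conjTranspose_mul_mul (CFC.negPart_nonneg T) S
  have h_neg : -T ≤ T⁻ := neg_le.mp (CFC.neg_negPart_le hT)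
  have h_le : -(Sᴴ * T * S) ≤ Sᴴ * T⁻ * S := by
    simpa using conjTranspose_mul_mul_le_conjTranspose_mul_mul h_neg S
  calc (Sᴴ * T * S)⁻.trace ≤ (Sᴴ * T⁻ * S).trace := trace_negPart_le_trace h_nonneg h_le
    _ = (T⁻ * (S * Sᴴ)).trace := by rw [Matrix.mul_assoc, trace_mul_comm, Matrix.mul_assoc]

theorem sum_trace_negPart_conjTranspose_mul_mul_le (s : Finset ι) {T : Matrix n n 𝕜}
    (hT : T.IsHermitian) {S : ι → Matrix n m 𝕜} (hS : ∑ j ∈ s, S j * (S j)ᴴ ≤ 1) :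
    ∑ j ∈ s, ((S j)ᴴ * T * S j)⁻.trace ≤ T⁻.trace :=
  calc ∑ j ∈ s, ((S j)ᴴ * T * S j)⁻.trace
      ≤ ∑ j ∈ s, (T⁻ * (S j * (S j)ᴴ)).trace :=
        sum_le_sum fun j _ => trace_negPart_conjTranspose_mul_mul_le hT (S j)
    _ = (T⁻ * ∑ j ∈ s, S j * (S j)ᴴ).trace := by rw [mul_sum, trace_sum]
    _ ≤ (T⁻ * 1).trace := trace_mul_le_trace_mul_left (CFC.negPart_nonneg T) hS
    _ = T⁻.trace := by rw [mul_one]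

end TraceNegPart

theorem ofReal_trNeg {n : ℕ} (X : Matrix (Fin n) (Fin n) ℂ) : (trNeg X : ℂ) = X⁻.trace := by
  by_cases hX : X.IsHermitian
  · simp [trNeg, hX, negPart_eq_cfc, trace_cfc_eq_sum_eigenvalues hX, negPart_def, max_comm]
  · simp [trNeg, hX, CFC.negPart_eq_zero_of_not_isSelfAdjoint hX]

theorem trNeg_sum_products_le_general {m n : ℕ} {ι : Type*} [Fintype ι]
    {T : Matrix (Fin n) (Fin n) ℂ} (hT : T.IsHermitian) {S : ι → Matrix (Fin n) (Fin m) ℂ}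
    (hS : loewnerLE (∑ j, S j * (S j)ᴴ) 1) :
    trNeg (∑ j, (S j)ᴴ * T * S j) ≤ ∑ j, trNeg ((S j)ᴴ * T * S j) ∧
      ∑ j, trNeg ((S j)ᴴ * T * S j) ≤ trNeg T := by
  simp only [← Complex.real_le_real, Complex.ofReal_sum, ofReal_trNeg]
  exact ⟨trace_negPart_sum_le univ fun j _ => isHermitian_conjTranspose_mul_mul (S j) hT,
    sum_trace_negPart_conjTranspose_mul_mul_le univ hT hS⟩

/-- **Estimate on the trace of a sum of products.** For a Hermitian matrix T and
positive semidefinite matrices S₁,…,S_k with Σⱼ Sⱼ² ⪯ I,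
Tr((Σⱼ SⱼTSⱼ)₋) ≤ Σⱼ Tr((SⱼTSⱼ)₋) ≤ Tr(T₋). -/
theorem trNeg_sum_products_le (n k : ℕ) (T : Matrix (Fin n) (Fin n) ℂ)
    (hT : T.IsHermitian) (S : Fin k → Matrix (Fin n) (Fin n) ℂ)
    (hS : ∀ j, (S j).PosSemidef)
    (hsum : loewnerLE (∑ j, S j ^ 2) 1) :
    trNeg (∑ j, S j * T * S j) ≤ ∑ j, trNeg (S j * T * S j) ∧
      ∑ j, trNeg (S j * T * S j) ≤ trNeg T := by
  have hS_star (j : Fin k) : (S j)ᴴ = S j := (hS j).isHermitian.eq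
  simpa only [hS_star] using
    trNeg_sum_products_le_general hT (S := S) (by simpa only [hS_star, ← sq] using hsum)

end
end

section
/- Pull-out formula (finite-dimensional Hansen–Pedersen inequality): let 0 < s ≤ 1, let A₁, …, A_k be positive semidefinite n×n Hermitian complex matrices, and let S₁, …, S_k be positive semidefinite n×n Hermitian matrices with S₁² + ⋯ + S_k² = I. Then (Σ_{j=1}^{k} S_j A_j S_j)^s ⪰ Σ_{j=1}^{k} S_j A_j^s S_j in the Loewner order. -/
noncomputable section

open Matrix Finset
open scoped ComplexOrder

/-- Real power X^s of a matrix through the spectral functional calculus of a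
Hermitian matrix (each eigenvalue raised to the real power s); junk value 0
for non-Hermitian matrices. -/
def matRPow {n : ℕ} (X : Matrix (Fin n) (Fin n) ℂ) (s : ℝ) :
    Matrix (Fin n) (Fin n) ℂ :=
  if h : X.IsHermitian then
    (h.eigenvectorUnitary : Matrix (Fin n) (Fin n) ℂ) *
      Matrix.diagonal (fun i => ((h.eigenvalues i ^ s : ℝ) : ℂ)) *
      (star (h.eigenvectorUnitary : Matrix (Fin n) (Fin n) ℂ))
  else 0

/-!
Inversion satisfies Jensen's inequality: if `∑ i, star bᵢ * bᵢ = 1` and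
`x = ∑ i, star bᵢ * mᵢ * bᵢ`, then `∑ i, star bᵢ * mᵢ⁻¹ * bᵢ - x⁻¹` is the sum of the squares
`star (bᵢ - mᵢ * bᵢ * x⁻¹) * mᵢ⁻¹ * (bᵢ - mᵢ * bᵢ * x⁻¹)`. For `0 < s < 1` the power `x ^ s` is an
integral over `t > 0` of `t ^ (s - 1) - t ^ s * (t + x)⁻¹`, so the reversed inequality passes from
`-(t + x)⁻¹` to `x ^ s`.
-/

open scoped NNReal

lemma sum_star_mul_algebraMap_add_mul {𝕜 R ι : Type*} [CommSemiring 𝕜] [Semiring R] [Star R]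
    [Algebra 𝕜 R] {I : Finset ι} {b : ι → R}
    (hb : ∑ i ∈ I, star (b i) * b i = 1) (t : 𝕜) (a : ι → R) :
    ∑ i ∈ I, star (b i) * (algebraMap 𝕜 R t + a i) * b i =
      algebraMap 𝕜 R t + ∑ i ∈ I, star (b i) * a i * b i := by
  simp only [mul_add, add_mul, sum_add_distrib, ← Algebra.commutes t, mul_assoc]
  rw [← mul_sum, hb, mul_one]

section StarOrderedRing

variable {R ι : Type*} [Ring R] [StarRing R] [PartialOrder R] [StarOrderedRing R]

lemma ringInverse_nonneg {x : R} (hx : 0 ≤ x) : 0 ≤ Ring.inverse x := by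
  by_cases hux : IsUnit x
  · have h := star_left_conjugate_nonneg hx (Ring.inverse x)
    rwa [← Ring.inverse_star, hx.star_eq, Ring.inverse_mul_cancel x hux, one_mul] at h
  · rw [Ring.inverse_non_unit x hux]

lemma sum_star_mul_mul_nonneg {I : Finset ι} {a : ι → R} (ha : ∀ i ∈ I, 0 ≤ a i) (b : ι → R) :
    0 ≤ ∑ i ∈ I, star (b i) * a i * b i :=
  sum_nonneg fun i hi => star_left_conjugate_nonneg (ha i hi) (b i)

lemma ringInverse_sum_star_mul_mul_le {I : Finset ι} {m b : ι → R}
    (hm : ∀ i ∈ I, IsStrictlyPositive (m i)) (hb : ∑ i ∈ I, star (b i) * b i = 1)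
    (hx : IsUnit (∑ i ∈ I, star (b i) * m i * b i)) :
    Ring.inverse (∑ i ∈ I, star (b i) * m i * b i) ≤
      ∑ i ∈ I, star (b i) * Ring.inverse (m i) * b i := by
  set x := ∑ i ∈ I, star (b i) * m i * b i with hx_def
  set y := Ring.inverse x
  have hx_nonneg : 0 ≤ x := sum_star_mul_mul_nonneg (fun i hi => (hm i hi).nonneg) b
  have hy : star y = y := (ringInverse_nonneg hx_nonneg).star_eq
  have expand_square : ∀ i ∈ I,
      star (b i - m i * b i * y) * Ring.inverse (m i) * (b i - m i * b i * y) =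
        star (b i) * Ring.inverse (m i) * b i - star (b i) * b i * y - y * (star (b i) * b i)
          + y * (star (b i) * m i * b i) * y := fun i hi => by
    have hmi : Ring.inverse (m i) * m i = 1 := Ring.inverse_mul_cancel _ (hm i hi).isUnit
    have him : m i * Ring.inverse (m i) = 1 := Ring.mul_inverse_cancel _ (hm i hi).isUnit
    calc _ = star (b i) * Ring.inverse (m i) * b i
          - star (b i) * (Ring.inverse (m i) * m i) * b i * y
          - y * star (b i) * (m i * Ring.inverse (m i)) * b i
          + y * star (b i) * (m i * Ring.inverse (m i)) * m i * b i * y := by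
          rw [star_sub, star_mul, star_mul, hy, (hm i hi).nonneg.star_eq]
          noncomm_ring
      _ = _ := by rw [hmi, him]; noncomm_ring
  have sum_squares : ∑ i ∈ I, star (b i) * Ring.inverse (m i) * b i - y =
      ∑ i ∈ I, star (b i - m i * b i * y) * Ring.inverse (m i) * (b i - m i * b i * y) := by
    rw [sum_congr rfl expand_square]
    simp only [sum_add_distrib, sum_sub_distrib, ← sum_mul, ← mul_sum, hb, ← hx_def]
    rw [Ring.inverse_mul_cancel x hx]
    noncomm_ring
  rw [← sub_nonneg, sum_squares]
  exact sum_star_mul_mul_nonneg (fun i hi => ringInverse_nonneg (hm i hi).nonneg) _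

end StarOrderedRing

section CStarAlgebra

variable {A ι : Type*} [CStarAlgebra A] [PartialOrder A] [StarOrderedRing A]

lemma ringInverse_algebraMap_add_sum_le {I : Finset ι} {a b : ι → A}
    (ha : ∀ i ∈ I, 0 ≤ a i) (hb : ∑ i ∈ I, star (b i) * b i = 1) {t : ℝ} (ht : 0 < t) :
    Ring.inverse (algebraMap ℝ A t + ∑ i ∈ I, star (b i) * a i * b i) ≤
      ∑ i ∈ I, star (b i) * Ring.inverse (algebraMap ℝ A t + a i) * b i := by
  have shift_pos {c : A} (hc : 0 ≤ c) : IsStrictlyPositive (algebraMap ℝ A t + c) := by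
    grind
  have hsum : 0 ≤ ∑ i ∈ I, star (b i) * a i * b i := sum_star_mul_mul_nonneg ha b
  rw [← sum_star_mul_algebraMap_add_mul hb]
  refine ringInverse_sum_star_mul_mul_le (fun i hi => shift_pos (ha i hi)) hb ?_
  rw [sum_star_mul_algebraMap_add_mul hb]
  exact (shift_pos hsum).isUnit

lemma cfcₙ_rpowIntegrand₀₁_eq_sub_ringInverse {p t : ℝ} (hp : p ≠ 1) (ht : 0 < t)
    {a : A} (ha : 0 ≤ a) :
    cfcₙ (Real.rpowIntegrand₀₁ p t) a =
      algebraMap ℝ A (t ^ (p - 1)) - t ^ p • Ring.inverse (algebraMap ℝ A t + a) := by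
  have hne : ∀ x ∈ quasispectrum ℝ a, t + x ≠ 0 := fun x hx =>
    (add_pos_of_pos_of_nonneg ht (quasispectrum_nonneg_of_nonneg a ha x hx)).ne'
  have hcont : ContinuousOn (fun x : ℝ => (t + x)⁻¹) (quasispectrum ℝ a) :=
    (continuousOn_const.add continuousOn_id).inv₀ hne
  have hsub := spectrum_subset_quasispectrum ℝ a
  have hcont' : ContinuousOn (fun x : ℝ => (t + x)⁻¹) (spectrum ℝ a) := hcont.mono hsub
  rw [cfcₙ_eq_cfc (hf := by unfold Real.rpowIntegrand₀₁; fun_prop),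
    Real.rpowIntegrand₀₁_eq_sub hp ht,
    cfc_sub (fun _ => t ^ (p - 1)) (fun x => t ^ p * (t + x)⁻¹) a continuousOn_const
      (continuousOn_const.mul hcont'),
    cfc_const .., cfc_const_mul _ _ _ hcont', cfc_inv _ _ fun x hx => hne x (hsub hx),
    cfc_const_add .., cfc_id' ..]

lemma sum_star_mul_cfcₙ_rpowIntegrand₀₁_mul_le {I : Finset ι} {a b : ι → A}
    (ha : ∀ i ∈ I, 0 ≤ a i) (hb : ∑ i ∈ I, star (b i) * b i = 1)
    {p t : ℝ} (hp : p ≠ 1) (ht : 0 < t) :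
    ∑ i ∈ I, star (b i) * cfcₙ (Real.rpowIntegrand₀₁ p t) (a i) * b i ≤
      cfcₙ (Real.rpowIntegrand₀₁ p t) (∑ i ∈ I, star (b i) * a i * b i) := by
  have hsum : 0 ≤ ∑ i ∈ I, star (b i) * a i * b i := sum_star_mul_mul_nonneg ha b
  calc ∑ i ∈ I, star (b i) * cfcₙ (Real.rpowIntegrand₀₁ p t) (a i) * b i
      = ∑ i ∈ I, star (b i) * (algebraMap ℝ A (t ^ (p - 1)) +
          -(t ^ p • Ring.inverse (algebraMap ℝ A t + a i))) * b i :=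
        sum_congr rfl fun i hi => by
          rw [cfcₙ_rpowIntegrand₀₁_eq_sub_ringInverse hp ht (ha i hi), sub_eq_add_neg]
    _ = algebraMap ℝ A (t ^ (p - 1)) -
          t ^ p • ∑ i ∈ I, star (b i) * Ring.inverse (algebraMap ℝ A t + a i) * b i := by
        rw [sum_star_mul_algebraMap_add_mul hb]
        simp only [mul_neg, neg_mul, sum_neg_distrib, mul_smul_comm, smul_mul_assoc, smul_sum,
          sub_eq_add_neg]
    _ ≤ algebraMap ℝ A (t ^ (p - 1)) -
          t ^ p • Ring.inverse (algebraMap ℝ A t + ∑ i ∈ I, star (b i) * a i * b i) := by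
        gcongr
        exact ringInverse_algebraMap_add_sum_le ha hb ht
    _ = cfcₙ (Real.rpowIntegrand₀₁ p t) (∑ i ∈ I, star (b i) * a i * b i) :=
        (cfcₙ_rpowIntegrand₀₁_eq_sub_ringInverse hp ht hsum).symm

lemma sum_star_mul_nnrpow_mul_le {I : Finset ι} {a b : ι → A}
    (ha : ∀ i ∈ I, 0 ≤ a i) (hb : ∑ i ∈ I, star (b i) * b i = 1)
    {p : ℝ≥0} (hp : p ∈ Set.Ioo 0 1) :
    ∑ i ∈ I, star (b i) * a i ^ p * b i ≤ (∑ i ∈ I, star (b i) * a i * b i) ^ p := by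
  obtain ⟨μ, hμ⟩ := CFC.exists_measure_nnrpow_eq_integral_cfcₙ_rpowIntegrand₀₁ A hp
  have hsum : 0 ≤ ∑ i ∈ I, star (b i) * a i * b i := sum_star_mul_mul_nonneg ha b
  let conj (i : ι) : A →L[ℝ] A := .mulLeftRight ℝ A (star (b i)) (b i)
  have conj_integrable : ∀ i ∈ I, MeasureTheory.IntegrableOn
      (fun t => conj i (cfcₙ (Real.rpowIntegrand₀₁ p t) (a i))) (Set.Ioi 0) μ := fun i hi =>
    (conj i).integrable_comp (hμ (a i) (ha i hi)).1
  have lhs_eq : ∑ i ∈ I, star (b i) * a i ^ p * b i =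
      ∫ t in Set.Ioi 0, ∑ i ∈ I, conj i (cfcₙ (Real.rpowIntegrand₀₁ p t) (a i)) ∂μ := by
    rw [MeasureTheory.integral_finsetSum I conj_integrable]
    refine sum_congr rfl fun i hi => ?_
    rw [(conj i).integral_comp_comm (hμ (a i) (ha i hi)).1, ← (hμ (a i) (ha i hi)).2]
    rfl
  rw [lhs_eq, (hμ _ hsum).2]
  refine MeasureTheory.setIntegral_mono_on (MeasureTheory.integrable_finsetSum I conj_integrable)
    (hμ _ hsum).1 measurableSet_Ioi fun t ht => ?_
  exact sum_star_mul_cfcₙ_rpowIntegrand₀₁_mul_le ha hb (by exact_mod_cast hp.2.ne) ht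

lemma sum_star_mul_rpow_mul_le {I : Finset ι} {a b : ι → A}
    (ha : ∀ i ∈ I, 0 ≤ a i) (hb : ∑ i ∈ I, star (b i) * b i = 1)
    {s : ℝ} (hs : s ∈ Set.Icc 0 1) :
    ∑ i ∈ I, star (b i) * a i ^ s * b i ≤ (∑ i ∈ I, star (b i) * a i * b i) ^ s := by
  have hsum : 0 ≤ ∑ i ∈ I, star (b i) * a i * b i := sum_star_mul_mul_nonneg ha b
  rcases hs.1.eq_or_lt with rfl | hs0
  · rw [CFC.rpow_zero _ hsum, ← hb]
    refine (sum_congr rfl fun i hi => ?_).le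
    rw [CFC.rpow_zero _ (ha i hi), mul_one]
  rcases hs.2.eq_or_lt with rfl | hs1
  · rw [CFC.rpow_one _ hsum]
    refine (sum_congr rfl fun i hi => ?_).le
    rw [CFC.rpow_one _ (ha i hi)]
  lift s to ℝ≥0 using hs.1
  have hs0 : 0 < s := by exact_mod_cast hs0
  simp only [← CFC.nnrpow_eq_rpow hs0]
  exact sum_star_mul_nnrpow_mul_le ha hb ⟨hs0, by exact_mod_cast hs1⟩

theorem pull_out_formula_general {I : Finset ι} {a b : ι → A}
    (ha : ∀ i ∈ I, 0 ≤ a i) (hb : ∑ i ∈ I, star (b i) * b i ≤ 1)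
    {s : ℝ} (hs0 : 0 < s) (hs1 : s ≤ 1) :
    ∑ i ∈ I, star (b i) * a i ^ s * b i ≤ (∑ i ∈ I, star (b i) * a i * b i) ^ s := by
  -- The operator `0` with weight `d` completes the weights to total mass `1`; `0 ^ s = 0`.
  let d := CFC.sqrt (1 - ∑ i ∈ I, star (b i) * b i)
  let a' : Option ι → A := fun o => o.elim 0 a
  let b' : Option ι → A := fun o => o.elim d b
  have ha' : ∀ o ∈ insertNone I, 0 ≤ a' o := forall_mem_insertNone.mpr ⟨le_rfl, ha⟩
  have hd : star d * d = 1 - ∑ i ∈ I, star (b i) * b i := by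
    rw [(CFC.sqrt_nonneg _).star_eq, CFC.sqrt_mul_sqrt_self _ (sub_nonneg.mpr hb)]
  have hb' : ∑ o ∈ insertNone I, star (b' o) * b' o = 1 := by
    simp [sum_insertNone, b', hd]
  have h0 : (0 : A) ^ s = 0 := CFC.zero_rpow hs0.ne'
  simpa [sum_insertNone, a', b', h0] using sum_star_mul_rpow_mul_le ha' hb' ⟨hs0.le, hs1⟩

end CStarAlgebra

section Matrix

open scoped MatrixOrder Matrix.Norms.L2Operator

variable {n : ℕ}

lemma loewnerLE_iff_le {X Y : Matrix (Fin n) (Fin n) ℂ} : loewnerLE X Y ↔ X ≤ Y :=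
  Matrix.le_iff.symm

lemma matRPow_eq_rpow {X : Matrix (Fin n) (Fin n) ℂ} (hX : X.PosSemidef) (s : ℝ) :
    matRPow X s = X ^ s := by
  rw [CFC.rpow_eq_cfc_real hX.nonneg, hX.isHermitian.cfc_eq, matRPow, dif_pos hX.isHermitian]
  rfl

lemma loewnerLE_sum_star_mul_matRPow_mul {ι : Type*} {I : Finset ι}
    {a b : ι → Matrix (Fin n) (Fin n) ℂ} (ha : ∀ i ∈ I, (a i).PosSemidef)
    (hb : loewnerLE (∑ i ∈ I, star (b i) * b i) 1) {s : ℝ} (hs0 : 0 < s) (hs1 : s ≤ 1) :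
    loewnerLE (∑ i ∈ I, star (b i) * matRPow (a i) s * b i)
      (matRPow (∑ i ∈ I, star (b i) * a i * b i) s) := by
  have hsum : (∑ i ∈ I, star (b i) * a i * b i).PosSemidef :=
    (sum_star_mul_mul_nonneg (fun i hi => (ha i hi).nonneg) b).posSemidef
  rw [loewnerLE_iff_le] at hb ⊢
  calc ∑ i ∈ I, star (b i) * matRPow (a i) s * b i
      = ∑ i ∈ I, star (b i) * a i ^ s * b i :=
        sum_congr rfl fun i hi => by rw [matRPow_eq_rpow (ha i hi)]
    _ ≤ (∑ i ∈ I, star (b i) * a i * b i) ^ s :=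
        pull_out_formula_general (fun i hi => (ha i hi).nonneg) hb hs0 hs1
    _ = matRPow (∑ i ∈ I, star (b i) * a i * b i) s := (matRPow_eq_rpow hsum s).symm

end Matrix

/-- **Pull-out formula (finite-dimensional Hansen–Pedersen inequality).** For
0 < s ≤ 1, positive semidefinite A₁,…,A_k and positive semidefinite S₁,…,S_k with
Σⱼ Sⱼ² = I, one has (Σⱼ SⱼAⱼSⱼ)^s ⪰ Σⱼ SⱼAⱼ^sSⱼ in the Loewner order. -/
theorem pull_out_formula (s : ℝ) (hs0 : 0 < s) (hs1 : s ≤ 1)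
    (n k : ℕ) (A S : Fin k → Matrix (Fin n) (Fin n) ℂ)
    (hA : ∀ j, (A j).PosSemidef) (hS : ∀ j, (S j).PosSemidef)
    (hsum : ∑ j, S j ^ 2 = 1) :
    loewnerLE (∑ j, S j * matRPow (A j) s * S j)
      (matRPow (∑ j, S j * A j * S j) s) := by
  have hstar : ∀ j, star (S j) = S j := fun j => (hS j).isHermitian
  have hweights : loewnerLE (∑ j, star (S j) * S j) 1 := by
    simp only [loewnerLE, hstar, ← sq, hsum, sub_self, PosSemidef.zero]
  simpa only [hstar] using
    loewnerLE_sum_star_mul_matRPow_mul (fun j _ => hA j) hweights hs0 hs1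

end
end
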